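/- arXiv:1503.07850 — 2 statements merged into one kernel-verified Lean document; each statement's English description precedes it below -/
import Mathlib

section
/- Let v₀(x) = exp((√2/4)·x)/(exp((√2/4)·x) + exp(−(√2/4)·x)), v₁(x,t) = −(1/2)·t/(exp((√2/4)·x) + exp(−(√2/4)·x))², and v₂(x,t) = −(1/8)·(exp((√2/4)·x) − exp(−(√2/4)·x))·t²/(exp((√2/4)·x) + exp(−(√2/4)·x))³. Then the function v₃(x,t) = −(1/48)·(exp((√2/4)·x)² − 4 + exp(−(√2/4)·x)²)·t³/(exp((√2/4)·x) + exp(−(√2/4)·x))⁴ satisfies v₃(x,0) = 0 for all x, and for all real x, t: ∂v₃/∂t(x,t) = ∂²v₂/∂x²(x,t) + 4·v₀(x)·v₂(x,t) − v₂(x,t) − 3·v₂(x,t)·v₀(x)² + 2·v₁(x,t)² − 3·v₀(x)·v₁(x,t)². -/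
/-! With `c = √2/4`, put `S = exp (c x) + exp (-c x)` and `D = exp (c x) - exp (-c x)`. Then `S` has
derivative `c D`, `D` has derivative `c S`, `D² = S² - 4` and `c² = 1/8`. Hence `D / S³` has first derivative
`c (12 / S⁴ - 2 / S²)` and second derivative `(D / S³ - 12 D / S⁵) / 2`, which gives `deriv_deriv_v₂`.
Since `v₀ = (1 + D / S) / 2`, both sides of the recursion are rational functions of `S`, `D` and `t`, and they
agree modulo `D² = S² - 4`. -/

noncomputable def v₀ : ℝ → ℝ := fun x =>
  Real.exp ((Real.sqrt 2 / 4) * x) /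
    (Real.exp ((Real.sqrt 2 / 4) * x) + Real.exp (-(Real.sqrt 2 / 4) * x))

noncomputable def v₁ : ℝ → ℝ → ℝ := fun x t =>
  -(1/2) * t / (Real.exp ((Real.sqrt 2 / 4) * x) + Real.exp (-(Real.sqrt 2 / 4) * x))^2

noncomputable def v₂ : ℝ → ℝ → ℝ := fun x t =>
  -(1/8) * (Real.exp ((Real.sqrt 2 / 4) * x) - Real.exp (-(Real.sqrt 2 / 4) * x)) * t^2 /
    (Real.exp ((Real.sqrt 2 / 4) * x) + Real.exp (-(Real.sqrt 2 / 4) * x))^3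

noncomputable def v₃ : ℝ → ℝ → ℝ := fun x t =>
  -(1/48) * ((Real.exp ((Real.sqrt 2 / 4) * x))^2 - 4 + (Real.exp (-(Real.sqrt 2 / 4) * x))^2) * t^3 /
    (Real.exp ((Real.sqrt 2 / 4) * x) + Real.exp (-(Real.sqrt 2 / 4) * x))^4

/-- The sum `S = exp (c x) + exp (-c x)`, with `c = √2/4`. -/
noncomputable def expSum (x : ℝ) : ℝ :=
  Real.exp ((Real.sqrt 2 / 4) * x) + Real.exp (-(Real.sqrt 2 / 4) * x)

/-- The difference `D = exp (c x) - exp (-c x)`, with `c = √2/4`. -/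
noncomputable def expDiff (x : ℝ) : ℝ :=
  Real.exp ((Real.sqrt 2 / 4) * x) - Real.exp (-(Real.sqrt 2 / 4) * x)

lemma expSum_ne_zero (x : ℝ) : expSum x ≠ 0 := by
  unfold expSum; positivity

lemma exp_mul_exp_neg (x : ℝ) :
    Real.exp ((Real.sqrt 2 / 4) * x) * Real.exp (-(Real.sqrt 2 / 4) * x) = 1 := by
  rw [← Real.exp_add]; simp

lemma expDiff_sq (x : ℝ) : expDiff x ^ 2 = expSum x ^ 2 - 4 := by
  unfold expSum expDiff
  linear_combination (-4) * exp_mul_exp_neg x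

lemma hasDerivAt_exp_mul (c x : ℝ) :
    HasDerivAt (fun y => Real.exp (c * y)) (c * Real.exp (c * x)) x := by
  have h := ((hasDerivAt_id x).const_mul c).exp
  simp only [id, mul_one] at h
  rwa [mul_comm] at h

lemma hasDerivAt_expSum (x : ℝ) :
    HasDerivAt expSum (Real.sqrt 2 / 4 * expDiff x) x := by
  refine ((hasDerivAt_exp_mul (Real.sqrt 2 / 4) x).add
    (hasDerivAt_exp_mul (-(Real.sqrt 2 / 4)) x)).congr_deriv ?_
  unfold expDiff; ring

lemma hasDerivAt_expDiff (x : ℝ) :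
    HasDerivAt expDiff (Real.sqrt 2 / 4 * expSum x) x := by
  refine ((hasDerivAt_exp_mul (Real.sqrt 2 / 4) x).sub
    (hasDerivAt_exp_mul (-(Real.sqrt 2 / 4)) x)).congr_deriv ?_
  unfold expSum; ring

lemma v₂_eq (x t : ℝ) : v₂ x t = -(1/8) * expDiff x * t^2 / expSum x ^ 3 := rfl

lemma hasDerivAt_v₂ (x t : ℝ) :
    HasDerivAt (fun y => v₂ y t)
      (-(1/8) * t^2 * (Real.sqrt 2 / 4) * (12 - 2 * expSum x ^ 2) / expSum x ^ 4) x := by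
  have hS := expSum_ne_zero x
  have h := (((hasDerivAt_expDiff x).const_mul (-(1/8))).mul_const (t^2)).div
    ((hasDerivAt_expSum x).pow 3) (pow_ne_zero 3 hS)
  refine h.congr_deriv ?_
  simp only [Pi.pow_apply]
  field_simp
  push_cast
  linear_combination (3 * t^2 * expSum x ^ 2) * expDiff_sq x

lemma deriv_deriv_v₂ (x t : ℝ) :
    deriv (deriv (fun y => v₂ y t)) x =
      -(1/16) * t^2 * expDiff x * (expSum x ^ 2 - 12) / expSum x ^ 5 := by
  have hS := expSum_ne_zero x
  have h2 : Real.sqrt 2 ^ 2 = 2 := Real.sq_sqrt (by norm_num)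
  rw [funext fun y => (hasDerivAt_v₂ y t).deriv]
  have h := (((((hasDerivAt_expSum x).pow 2).const_mul 2).const_sub 12).const_mul
    (-(1/8) * t^2 * (Real.sqrt 2 / 4))).div ((hasDerivAt_expSum x).pow 4) (pow_ne_zero 4 hS)
  refine (h.congr_deriv ?_).deriv
  simp only [Pi.pow_apply]
  field_simp
  push_cast
  rw [h2]
  ring

lemma v₀_eq (x : ℝ) : v₀ x = (expSum x + expDiff x) / (2 * expSum x) := by
  have hS := expSum_ne_zero x
  have h : v₀ x = ((expSum x + expDiff x) / 2) / expSum x := by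
    unfold v₀ expSum expDiff; congr 1; ring
  rw [h]; field_simp

lemma v₃_eq (x t : ℝ) : v₃ x t = -(1/48) * (expSum x ^ 2 - 6) / expSum x ^ 4 * t^3 := by
  have h : expSum x ^ 2 - 6 = (Real.exp ((Real.sqrt 2 / 4) * x))^2 - 4 +
      (Real.exp (-(Real.sqrt 2 / 4) * x))^2 := by
    unfold expSum; linear_combination 2 * exp_mul_exp_neg x
  rw [h]; unfold v₃ expSum; ring

theorem hpm_caseI_order3 :
    (∀ x : ℝ, v₃ x 0 = 0) ∧
    (∀ x t : ℝ,
      deriv (fun s => v₃ x s) t =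
        deriv (deriv (fun y => v₂ y t)) x +
          4 * v₀ x * v₂ x t - v₂ x t - 3 * v₂ x t * (v₀ x)^2 +
          2 * (v₁ x t)^2 - 3 * v₀ x * (v₁ x t)^2) := by
  refine ⟨fun x => by simp [v₃], fun x t => ?_⟩
  have hS := expSum_ne_zero x
  have hD := expDiff_sq x
  have h₁ : v₁ x t = -(1/2) * t / expSum x ^ 2 := rfl
  have h₃ : deriv (fun s => v₃ x s) t =
      -(1/48) * (expSum x ^ 2 - 6) / expSum x ^ 4 * (3 * t^2) := by
    rw [funext fun s => v₃_eq x s]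
    simp
  rw [h₃, deriv_deriv_v₂, v₀_eq, v₂_eq, h₁]
  generalize expSum x = S at *
  generalize expDiff x = D at *
  have hD3 : D ^ 3 = D * (S ^ 2 - 4) := by rw [← hD]; ring
  field_simp
  ring_nf
  simp only [hD3, hD]
  ring
end

section
/- Let α, β, γ : ℝ with α² + 8·β ≥ 0, and set ρ = √(α² + 8·β). Then the function v : ℝ × ℝ → ℝ defined by v(x,t) = γ/2 + (γ/2)·tanh((γ·(ρ − α)/8)·(x − (((α − ρ)·γ + 2·(α + ρ))/4)·t)) satisfies, for all real x and t, the Burgers–Huxley equation ∂v/∂t(x,t) = ∂²v/∂x²(x,t) − α·v(x,t)·∂v/∂x(x,t) + β·v(x,t)·(1 − v(x,t))·(v(x,t) − γ). -/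
/-!
Write `T` for the value of `tanh` at the phase `k (x - c t)`. Since `tanh' = 1 - tanh²`, every
term of the equation is a polynomial in `T`, and all of them share the factor `(γ/2) (1 - T²)`;
for the reaction term this is `v (v - γ) = -(γ²/4) (1 - T²)`. What remains is affine in `T`, and
both of its coefficients vanish because `ρ² = α² + 8β`, i.e. `8β = (ρ - α) (ρ + α)`.
-/

theorem hasDerivAt_real_tanh (x : ℝ) :
    HasDerivAt Real.tanh (1 - Real.tanh x ^ 2) x := by
  have hc : Real.cosh x ≠ 0 := (Real.cosh_pos x).ne'
  have hd := (Real.hasDerivAt_sinh x).div (Real.hasDerivAt_cosh x) hc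
  have hf : Real.tanh = Real.sinh / Real.cosh := by
    funext y
    simp [Real.tanh_eq_sinh_div_cosh]
  have he : 1 - Real.tanh x ^ 2 =
      (Real.cosh x * Real.cosh x - Real.sinh x * Real.sinh x) / Real.cosh x ^ 2 := by
    rw [Real.tanh_eq_sinh_div_cosh]
    field_simp
  rw [he, hf]
  exact hd

theorem deng_travelling_wave_upper (α β γ : ℝ) (h : α^2 + 8*β ≥ 0) :
    let ρ := Real.sqrt (α^2 + 8*β)
    let v : ℝ × ℝ → ℝ := fun p =>
      γ/2 + (γ/2) * Real.tanh ((γ * (ρ - α)/8) *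
        (p.1 - (((α - ρ) * γ + 2 * (α + ρ))/4) * p.2))
    ∀ x t : ℝ,
      deriv (fun s => v (x, s)) t =
        deriv (deriv (fun y => v (y, t))) x -
          α * v (x, t) * deriv (fun y => v (y, t)) x +
          β * v (x, t) * (1 - v (x, t)) * (v (x, t) - γ) := by
  intro ρ v x t
  have hρ : ρ ^ 2 = α ^ 2 + 8 * β := Real.sq_sqrt h
  have hβ : β = (ρ ^ 2 - α ^ 2) / 8 := by linarith
  clear_value ρ
  set k := γ * (ρ - α) / 8 with hk
  set c := ((α - ρ) * γ + 2 * (α + ρ)) / 4 with hc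
  have tanh_x : ∀ y, HasDerivAt (fun y => Real.tanh (k * (y - c * t)))
      ((1 - Real.tanh (k * (y - c * t)) ^ 2) * (k * 1)) y := fun y =>
    (hasDerivAt_real_tanh _).comp y (((hasDerivAt_id y).sub_const (c * t)).const_mul k)
  have v_t : HasDerivAt (fun s => v (x, s))
      (γ / 2 * ((1 - Real.tanh (k * (x - c * t)) ^ 2) * (k * -(c * 1)))) t :=
    (((hasDerivAt_real_tanh _).comp t
      ((((hasDerivAt_id t).const_mul c).const_sub x).const_mul k)).const_mul (γ / 2)).const_add
        (γ / 2)
  have v_x : deriv (fun y => v (y, t)) =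
      fun y => γ / 2 * ((1 - Real.tanh (k * (y - c * t)) ^ 2) * (k * 1)) :=
    funext fun y => (((tanh_x y).const_mul (γ / 2)).const_add (γ / 2)).deriv
  have v_xx := (((((tanh_x x).pow 2).const_sub 1).mul_const (k * 1)).const_mul (γ / 2)).deriv
  simp only [Pi.pow_apply] at v_xx
  rw [v_t.deriv, v_x, v_xx]
  simp only [v]
  generalize Real.tanh (k * (x - c * t)) = T
  rw [hβ, hk, hc]
  push_cast
  ring
end
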